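/- arXiv:1201.2368 — 6 statements merged into one kernel-verified Lean document; each statement's English description precedes it below -/
import Mathlib

section
/- Let S be an Ellis semigroup, I a minimal left ideal of S, and u ∈ I an idempotent. Then the set u*I := {u*x : x ∈ I} is a group under the operation *: it is closed under *, u is a two-sided identity for it (u*x = x and x*u = x for every x ∈ u*I), and for every x ∈ u*I there exists y ∈ u*I with x*y = u and y*x = u. -/
/-!
Minimality gives `S * x = I` for every `x ∈ I`. Applied to `u`, this makes `u` a right identity
on `I`; applied to `x ∈ u * I`, it gives `s` with `s * x = u`, so that `u * (s * u)` is a left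
inverse of `x` inside `u * I`. A monoid in which every element has a left inverse is a group.
-/

/-- A left ideal of a magma: a nonempty subset closed under left multiplication
by arbitrary elements. -/
def IsLeftIdeal {S : Type*} [Mul S] (I : Set S) : Prop :=
  I.Nonempty ∧ ∀ a : S, ∀ x ∈ I, a * x ∈ I

/-- A minimal left ideal: a left ideal containing no proper left sub-ideal. -/
def IsMinimalLeftIdeal {S : Type*} [Mul S] (I : Set S) : Prop :=
  IsLeftIdeal I ∧ ∀ J : Set S, IsLeftIdeal J → J ⊆ I → J = I

/-- A minimal left ideal is generated, as a left ideal, by any of its elements. -/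
theorem IsMinimalLeftIdeal.exists_mul_eq {S : Type*} [Semigroup S] {I : Set S}
    (hI : IsMinimalLeftIdeal I) {x t : S} (hx : x ∈ I) (ht : t ∈ I) : ∃ s, s * x = t := by
  have hJ : IsLeftIdeal (Set.range fun s : S => s * x) := by
    refine ⟨⟨x * x, x, rfl⟩, ?_⟩
    rintro a _ ⟨s, rfl⟩
    exact ⟨a * s, mul_assoc a s x⟩
  have hJI : (Set.range fun s : S => s * x) ⊆ I := by
    rintro _ ⟨s, rfl⟩
    exact hI.1.2 s x hx
  rw [← hI.2 _ hJ hJI] at ht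
  exact ht

/-- Let `S` be an Ellis semigroup, `I` a minimal left ideal and `u ∈ I` an idempotent.
Then `u*I = {u*x : x ∈ I}` is a group under the semigroup operation: it is closed under
multiplication, `u` is a two-sided identity for it, and every element has a two-sided
inverse in it. -/
theorem ideal_group_is_group {S : Type*} [Semigroup S] [TopologicalSpace S]
    [CompactSpace S] [T2Space S] [Nonempty S]
    (hcont : ∀ b : S, Continuous fun x : S => x * b)
    (I : Set S) (hI : IsMinimalLeftIdeal I) (u : S) (huI : u ∈ I) (hu : u * u = u) :
    (∀ x ∈ (fun x : S => u * x) '' I, ∀ y ∈ (fun x : S => u * x) '' I,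
      x * y ∈ (fun x : S => u * x) '' I) ∧
    (∀ x ∈ (fun x : S => u * x) '' I, u * x = x ∧ x * u = x) ∧
    (∀ x ∈ (fun x : S => u * x) '' I, ∃ y ∈ (fun x : S => u * x) '' I,
      x * y = u ∧ y * x = u) := by
  have hleft : ∀ x ∈ (fun x : S => u * x) '' I, u * x = x := by
    rintro _ ⟨z, -, rfl⟩
    simp only [← mul_assoc, hu]
  have hmem : ∀ x ∈ (fun x : S => u * x) '' I, x ∈ I := by
    rintro _ ⟨z, hz, rfl⟩
    exact hI.1.2 u z hz
  have hright : ∀ x ∈ I, x * u = x := by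
    intro x hx
    obtain ⟨s, rfl⟩ := hI.exists_mul_eq huI hx
    rw [mul_assoc, hu]
  have hinv : ∀ x ∈ (fun x : S => u * x) '' I,
      ∃ y ∈ (fun x : S => u * x) '' I, y * x = u := by
    intro x hx
    obtain ⟨s, hs⟩ := hI.exists_mul_eq (hmem x hx) huI
    refine ⟨u * (s * u), ⟨s * u, hI.1.2 s u huI, rfl⟩, ?_⟩
    rw [mul_assoc, mul_assoc, hleft x hx, hs, hu]
  refine ⟨?_, fun x hx => ⟨hleft x hx, hright x (hmem x hx)⟩, ?_⟩
  · intro x hx y hy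
    exact ⟨x * y, hI.1.2 x y (hmem y hy), by simp only [← mul_assoc, hleft x hx]⟩
  · intro x hx
    obtain ⟨y, hy, hyx⟩ := hinv x hx
    obtain ⟨z, hz, hzy⟩ := hinv y hy
    -- The left inverse `z` of `y` coincides with `x`, so `y` is also a right inverse of `x`.
    have hzx : z = x := by
      rw [← hright z (hmem z hz), ← hyx, ← mul_assoc, hzy, hleft x hx]
    exact ⟨y, hy, hzx ▸ hzy, hyx⟩
end

section
/- Let S, K, π be as in the abstract Section 2 setting. Then S has no proper left ideals: every left ideal of S is equal to S. -/
/-- Abstract Section 2 setting: `S` a semigroup, `K` a group, `π : S → K` surjective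
and multiplicative, with `p * q = p` whenever `π q = 1`. Then `S` has no proper
left ideals: every nonempty subset closed under left multiplication is all of `S`. -/
theorem no_proper_left_ideals {S K : Type*} [Semigroup S] [Group K]
    (π : S → K) (hsurj : Function.Surjective π)
    (hhom : ∀ a b : S, π (a * b) = π a * π b)
    (habs : ∀ p q : S, π q = 1 → p * q = p) :
    ∀ I : Set S, I.Nonempty → (∀ a : S, ∀ x ∈ I, a * x ∈ I) → I = Set.univ := by
  rintro I ⟨x, hx⟩ hI
  obtain ⟨b, hb⟩ := hsurj (π x)⁻¹
  refine Set.eq_univ_of_forall fun s => ?_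
  -- `b * x` lies in `I` and in the kernel of `π`, so it is a right identity of `S`.
  rw [← habs s (b * x) (by rw [hhom, hb, inv_mul_cancel])]
  exact hI s _ (hI b x hx)
end

section
/- Let S, K, π be as in the abstract Section 2 setting and let u ∈ S be an idempotent.ation Then the set u*S := {u*s : s ∈ S} is a group under *: it is closed under *, u is a two-sided identity for it, and every element of u*S has a two-sided inverse in u*S. -/
/-- Abstract Section 2 setting: `S` a semigroup, `K` a group, `π : S → K` surjective
and multiplicative, with `p * q = p` whenever `π q = 1`. For an idempotent `u ∈ S`,
the set `u*S = {u*s : s ∈ S}` is a group under `*`: it is closed under `*`, `u` is a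
two-sided identity for it, and every element has a two-sided inverse in it. -/
theorem uS_is_group {S K : Type*} [Semigroup S] [Group K]
    (π : S → K) (hsurj : Function.Surjective π)
    (hhom : ∀ a b : S, π (a * b) = π a * π b)
    (habs : ∀ p q : S, π q = 1 → p * q = p)
    (u : S) (hu : u * u = u) :
    (∀ x ∈ Set.range fun s : S => u * s, ∀ y ∈ Set.range fun s : S => u * s,
      x * y ∈ Set.range fun s : S => u * s) ∧
    (∀ x ∈ Set.range fun s : S => u * s, u * x = x ∧ x * u = x) ∧
    (∀ x ∈ Set.range fun s : S => u * s, ∃ y ∈ Set.range fun s : S => u * s,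
      x * y = u ∧ y * x = u) := by
  have hπu : π u = 1 := by
    have h := hhom u u
    rw [hu] at h
    exact left_eq_mul.mp h
  refine ⟨?_, ?_, ?_⟩
  · rintro _ ⟨s, rfl⟩ _ ⟨t, rfl⟩
    exact ⟨s * (u * t), (mul_assoc u s (u * t)).symm⟩
  · rintro _ ⟨s, rfl⟩
    exact ⟨by simp only [← mul_assoc, hu], habs _ u hπu⟩
  · rintro _ ⟨s, rfl⟩
    -- Any `t` over `(π s)⁻¹` works: both products have the form `u * q` with `π q = 1`,
    -- so absorption collapses them to `u`.
    obtain ⟨t, ht⟩ := hsurj (π s)⁻¹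
    refine ⟨u * t, ⟨t, rfl⟩, ?_, ?_⟩
    · change u * s * (u * t) = u
      rw [mul_assoc]
      exact habs _ _ (by simp [hhom, hπu, ht])
    · change u * t * (u * s) = u
      rw [mul_assoc]
      exact habs _ _ (by simp [hhom, hπu, ht])
end

section
/- Let S, K, π be as in the abstract Section 2 setting and let u ∈ S be an idempotent. Then the restriction of π to u*S := {u*s : s ∈ S} is a bijection from u*S onto K; that is, u*S meets every fiber π⁻¹(k) (k ∈ K) in exactly one element. In particular, π restricted to u*S is a group isomorphism from the group (u*S, *) onto K. -/
/-! Since `π u` is an idempotent of a group, `π u = 1`, so `π (u * s) = π s` and surjectivity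
is inherited. For injectivity, two points of `u * S` in the same fiber are compared through an
element `r` over the inverse of their common image: reassociating a product in which
both bracketings are absorbed identifies the two points. -/

/-- Abstract Section 2 setting: `S` a semigroup, `K` a group, `π : S → K` surjective
and multiplicative, with `p * q = p` whenever `π q = 1`. For an idempotent `u ∈ S`,
the restriction of `π` to `u*S = {u*s : s ∈ S}` is a bijection onto `K`; that is,
`u*S` meets every fiber of `π` in exactly one point. Since `π` is multiplicative,
this restriction is a group isomorphism from the group `(u*S, *)` onto `K`. -/
theorem pi_restricted_to_uS_bijective {S K : Type*} [Semigroup S] [Group K]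
    (π : S → K) (hsurj : Function.Surjective π)
    (hhom : ∀ a b : S, π (a * b) = π a * π b)
    (habs : ∀ p q : S, π q = 1 → p * q = p)
    (u : S) (hu : u * u = u) :
    Set.BijOn π (Set.range fun s : S => u * s) Set.univ ∧
    ∀ k : K, ∃! x : S, x ∈ (Set.range fun s : S => u * s) ∧ π x = k := by
  have hu1 : π u = 1 := by simpa [hhom] using congrArg π hu
  have hsurj' : ∀ k : K, ∃ x ∈ Set.range (fun s : S => u * s), π x = k := fun k => by
    obtain ⟨s, rfl⟩ := hsurj k
    exact ⟨u * s, ⟨s, rfl⟩, by simp [hhom, hu1]⟩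
  have hinj : Set.InjOn π (Set.range fun s : S => u * s) := by
    rintro _ ⟨s, rfl⟩ _ ⟨t, rfl⟩ h
    have hst : π s = π t := by simpa [hhom, hu1] using h
    -- With `π r` inverse to `π s = π t`, both `r * (u * t)` and `s * r` lie over `1`,
    -- so `(u * s) * r * (u * t)` absorbs to `u * s` or to `u * (u * t) = u * t`.
    obtain ⟨r, hr⟩ := hsurj (π s)⁻¹
    calc u * s = u * s * (r * (u * t)) := (habs _ _ (by simp [hhom, hu1, hr, hst])).symm
      _ = u * (s * r) * (u * t) := by simp only [mul_assoc]
      _ = u * (u * t) := by rw [habs u (s * r) (by simp [hhom, hr])]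
      _ = u * t := by rw [← mul_assoc, hu]
  refine ⟨⟨Set.mapsTo_univ _ _, hinj, fun k _ => hsurj' k⟩, fun k => ?_⟩
  obtain ⟨x, hx, rfl⟩ := hsurj' k
  exact ⟨x, ⟨hx, rfl⟩, fun y hy => hinj hy.1 hx hy.2⟩
end

section
/- Let S, K, π be as in the abstract Section 2 setting and let u ∈ S be an idempotent. Then for all s, t ∈ S: u*s = u*t if and only if π(s) = π(t). That is, the fibers of the map S → S, s ↦ u*s, coincide with the fibers of π. -/
/-- Abstract Section 2 setting: `S` a semigroup, `K` a group, `π : S → K` surjective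
and multiplicative, with `p * q = p` whenever `π q = 1`. For an idempotent `u ∈ S`
and any `s, t ∈ S`: `u*s = u*t` iff `π s = π t`, i.e. the fibers of `s ↦ u*s`
coincide with the fibers of `π`. -/
theorem fibers_of_mul_u_eq_fibers_of_pi {S K : Type*} [Semigroup S] [Group K]
    (π : S → K) (hsurj : Function.Surjective π)
    (hhom : ∀ a b : S, π (a * b) = π a * π b)
    (habs : ∀ p q : S, π q = 1 → p * q = p)
    (u : S) (hu : u * u = u) :
    ∀ s t : S, u * s = u * t ↔ π s = π t := by
  intro s t
  constructor
  · intro h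
    have hmul := congrArg π h
    rw [hhom, hhom] at hmul
    exact mul_left_cancel hmul
  · intro h
    -- A lift `r` of `(π s)⁻¹` makes both `s * r` and `r * t` lie over `1`,
    -- so both are absorbed on the right: `u * s = u * s * r * t = u * t`.
    obtain ⟨r, hr⟩ := hsurj (π s)⁻¹
    have hsr : π (s * r) = 1 := by rw [hhom, hr, mul_inv_cancel]
    have hrt : π (r * t) = 1 := by rw [hhom, hr, h, inv_mul_cancel]
    calc u * s = u * s * (r * t) := (habs _ _ hrt).symm
      _ = u * (s * r) * t := by simp only [mul_assoc]
      _ = u * t := by rw [habs _ _ hsr]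
end

section
/- Let G be a group, H a subgroup of G, and B a Boolean algebra of subsets of G closed under left translation by elements of G. Assume (a) the union of any two non-generic members of B is non-generic, and (b) for every generic X ∈ B, every left translate g·X (g ∈ G) has nonempty intersection with H. Then every X ∈ B for which there exist finitely many h_1, …, h_n ∈ H with H ⊆ h_1·X ∪ … ∪ h_n·X is generic. -/
/-!
Let `Z` be the union of the `H`-translates of `X` covering `H`; it lies in `B`. The complement of
`Z` misses `H`, so it is not generic by (b). As `Z ∪ Zᶜ = G` is generic, (a) makes `Z` generic.
Finally, finitely many translates of `Z` are finitely many translates of `X`, so `X` is generic.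
-/

/-- A subset `X` of a group `G` is (left) generic if finitely many left translates of
`X` cover `G`: there is a finite set `s ⊆ G` with `G = ⋃_{g ∈ s} g·X`
(note `x ∈ g·X ↔ g⁻¹ * x ∈ X`). -/
def GenericSet {G : Type*} [Group G] (X : Set G) : Prop :=
  ∃ s : Finset G, ∀ x : G, ∃ g ∈ s, g⁻¹ * x ∈ X

theorem iUnion_translates_mem {G : Type*} [Group G] {B : Set (Set G)}
    (hB_univ : Set.univ ∈ B) (hB_compl : ∀ X ∈ B, Xᶜ ∈ B)
    (hB_union : ∀ X ∈ B, ∀ Y ∈ B, X ∪ Y ∈ B)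
    (hB_trans : ∀ g : G, ∀ X ∈ B, {x : G | g⁻¹ * x ∈ X} ∈ B)
    {X : Set G} (hX : X ∈ B) (s : Finset G) :
    {x : G | ∃ g ∈ s, g⁻¹ * x ∈ X} ∈ B := by
  classical
  induction s using Finset.induction_on with
  | empty => simpa using hB_compl _ hB_univ
  | insert a s _ ih =>
    convert hB_union _ (hB_trans a X hX) _ ih using 1
    ext x
    simp

/-- If the union of finitely many translates of `X` is generic, so is `X`: a cover of `G` indexed by
`t` becomes one indexed by the products `a * b` with `a ∈ t`, `b ∈ s`. -/
theorem GenericSet.of_iUnion_translates {G : Type*} [Group G] {X : Set G} {s : Finset G}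
    (h : GenericSet {x : G | ∃ g ∈ s, g⁻¹ * x ∈ X}) : GenericSet X := by
  classical
  obtain ⟨t, ht⟩ := h
  refine ⟨(t ×ˢ s).image fun p => p.1 * p.2, fun x => ?_⟩
  obtain ⟨a, ha, b, hb, hx⟩ := ht x
  refine ⟨a * b, Finset.mem_image.2 ⟨(a, b), Finset.mk_mem_product ha hb, rfl⟩, ?_⟩
  simpa [mul_assoc] using hx

/-- Let `G` be a group, `H ≤ G` a subgroup, and `B` a Boolean algebra of subsets of `G`
closed under left translation. Assume (a) the union of two non-generic members of `B`
is non-generic, and (b) every left translate of a generic member of `B` meets `H`.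
Then every `X ∈ B` such that finitely many left translates of `X` by elements of `H`
cover `H` is generic. -/
theorem generic_in_H_implies_generic {G : Type*} [Group G] (H : Subgroup G)
    (B : Set (Set G))
    (hB_univ : Set.univ ∈ B)
    (hB_compl : ∀ X ∈ B, Xᶜ ∈ B)
    (hB_union : ∀ X ∈ B, ∀ Y ∈ B, X ∪ Y ∈ B)
    (hB_trans : ∀ g : G, ∀ X ∈ B, {x : G | g⁻¹ * x ∈ X} ∈ B)
    (ha : ∀ X ∈ B, ∀ Y ∈ B, ¬ GenericSet X → ¬ GenericSet Y → ¬ GenericSet (X ∪ Y))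
    (hb : ∀ X ∈ B, GenericSet X → ∀ g : G, ∃ h : G, h ∈ H ∧ g⁻¹ * h ∈ X) :
    ∀ X ∈ B, (∃ s : Finset G, (∀ h ∈ s, h ∈ H) ∧ ∀ x ∈ H, ∃ h ∈ s, h⁻¹ * x ∈ X) →
      GenericSet X := by
  rintro X hX ⟨s, -, hs⟩
  have hZ := iUnion_translates_mem hB_univ hB_compl hB_union hB_trans hX s
  refine GenericSet.of_iUnion_translates (s := s) ?_
  by_contra hZg
  refine ha _ hZ _ (hB_compl _ hZ) hZg (fun hc => ?_) ⟨{1}, by simp [Set.union_compl_self]⟩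
  obtain ⟨h, hH, hmem⟩ := hb _ (hB_compl _ hZ) hc 1
  rw [inv_one, one_mul] at hmem
  exact hmem (hs h hH)
end
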